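/- arXiv:1003.5368 — 2 statements merged into one kernel-verified Lean document; each statement's English description precedes it below -/
import Mathlib

section
/- Let u be a nonzero vector in E_tW and v a nonzero vector in E*_rW. Then for 0 ≤ i ≤ d, ‖E*_{r+i}u‖² = ‖u‖²·k_i(W)/ν(W) and ‖E_{t+i}v‖² = ‖v‖²·k*_i(W)/ν(W). -/
open Matrix
open scoped Classical

noncomputable section

/-- The full setup: a `Q`-polynomial distance-regular graph `Γ = (X,R)` of diameter `D ≥ 3`,
with adjacency matrix `A`, primitive idempotents `E_i`, eigenvalues `θ_i`,
Krein parameters `q^h_{ij}`, a fixed base vertex `x`, dual primitive idempotents `E*_i`,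
dual adjacency matrix `A*` and dual eigenvalues `θ*_i`. -/
structure TSetup (X : Type*) [Fintype X] [DecidableEq X] where
  G : SimpleGraph X
  hGconn : G.Connected
  D : ℕ
  hD3 : 3 ≤ D
  hDiamLe : ∀ y z : X, G.dist y z ≤ D
  hDiamEq : ∃ y z : X, G.dist y z = D
  p : ℕ → ℕ → ℕ → ℕ
  hDRG : ∀ h i j : ℕ, h ≤ D → i ≤ D → j ≤ D → ∀ y z : X, G.dist y z = h →
    Nat.card {w : X // G.dist y w = i ∧ G.dist z w = j} = p h i j
  A : Matrix X X ℂ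
  hA : ∀ y z : X, A y z = if G.Adj y z then 1 else 0
  E : ℕ → Matrix X X ℂ
  hEzero : ∀ i : ℕ, D < i → E i = 0
  hEsum : ∑ i ∈ Finset.range (D + 1), E i = 1
  hEidem : ∀ i j : ℕ, i ≤ D → j ≤ D → E i * E j = if i = j then E i else 0
  hEsymm : ∀ i : ℕ, (E i)ᵀ = E i
  hEreal : ∀ i : ℕ, (E i).map (starRingEnd ℂ) = E i
  hE0 : E 0 = (Fintype.card X : ℂ)⁻¹ • Matrix.of (fun _ _ => (1 : ℂ))
  θ : ℕ → ℝ
  hθinj : ∀ i j : ℕ, i ≤ D → j ≤ D → θ i = θ j → i = j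
  hAspec : A = ∑ i ∈ Finset.range (D + 1), (θ i : ℂ) • E i
  q : ℕ → ℕ → ℕ → ℝ
  hKrein : ∀ i j : ℕ, i ≤ D → j ≤ D →
    Matrix.hadamard (E i) (E j) =
      (Fintype.card X : ℂ)⁻¹ • ∑ h ∈ Finset.range (D + 1), (q h i j : ℂ) • E h
  hQpoly0 : ∀ h i j : ℕ, h ≤ D → i ≤ D → j ≤ D →
    (i + j < h ∨ h + j < i ∨ h + i < j) → q h i j = 0
  hQpoly1 : ∀ h i j : ℕ, h ≤ D → i ≤ D → j ≤ D →
    (h = i + j ∨ i = h + j ∨ j = h + i) → q h i j ≠ 0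
  x : X
  Estar : ℕ → Matrix X X ℂ
  hEstarzero : ∀ i : ℕ, D < i → Estar i = 0
  hEstar : ∀ i : ℕ, i ≤ D → ∀ y z : X,
    Estar i y z = if y = z ∧ G.dist x y = i then 1 else 0
  Astar : Matrix X X ℂ
  hAstar : ∀ y z : X, Astar y z = if y = z then (Fintype.card X : ℂ) * E 1 x y else 0
  θstar : ℕ → ℝ
  hθstarinj : ∀ i j : ℕ, i ≤ D → j ≤ D → θstar i = θstar j → i = j
  hAstarspec : Astar = ∑ i ∈ Finset.range (D + 1), (θstar i : ℂ) • Estar i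

variable {X : Type*} [Fintype X] [DecidableEq X]

/-- The Terwilliger algebra `T = T(x)`, generated by `A` and `A*`. -/
def TSetup.T (S : TSetup X) : Subalgebra ℂ (Matrix X X ℂ) :=
  Algebra.adjoin ℂ {S.A, S.Astar}

/-- A thin irreducible `T`-module `W` with endpoint `r`, dual endpoint `t` and diameter `d`,
where `E*_i W ≠ 0` iff `r ≤ i ≤ r + d` and `E_i W ≠ 0` iff `t ≤ i ≤ t + d`. -/
structure TMod (S : TSetup X) where
  W : Submodule ℂ (X → ℂ)
  hWinv : ∀ B ∈ S.T, ∀ w ∈ W, B *ᵥ w ∈ W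
  hWne : W ≠ ⊥
  hWirr : ∀ U : Submodule ℂ (X → ℂ), U ≤ W →
    (∀ B ∈ S.T, ∀ w ∈ U, B *ᵥ w ∈ U) → U = ⊥ ∨ U = W
  hthin : ∀ i : ℕ, Module.finrank ℂ (W.map (S.Estar i).mulVecLin) ≤ 1
  r : ℕ
  t : ℕ
  d : ℕ
  hr : ∀ i : ℕ, W.map (S.Estar i).mulVecLin ≠ ⊥ ↔ r ≤ i ∧ i ≤ r + d
  ht : ∀ i : ℕ, W.map (S.E i).mulVecLin ≠ ⊥ ↔ t ≤ i ∧ i ≤ t + d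

open Classical in
/-- The action of a matrix `B` on `W` (the restriction of `B` to `W`; defined to be `0`
if `B` does not leave `W` invariant). -/
def actW (S : TSetup X) (M : TMod S) (B : Matrix X X ℂ) : M.W →ₗ[ℂ] M.W :=
  if h : ∀ w ∈ M.W, B.mulVecLin w ∈ M.W then B.mulVecLin.restrict h else 0

/-- `tr_W(B)`: the trace of the action of `B` on `W`. -/
def trW (S : TSetup X) (M : TMod S) (B : Matrix X X ℂ) : ℂ :=
  LinearMap.trace ℂ M.W (actW S M B)

/-- `a_i(W) = tr_W(E*_{r+i} A)`. -/
def aW (S : TSetup X) (M : TMod S) (i : ℕ) : ℂ :=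
  trW S M (S.Estar (M.r + i) * S.A)

/-- `x_i(W) = tr_W(E*_{r+i} A E*_{r+i-1} A)`, with `x_0(W) = 0`. -/
def xW (S : TSetup X) (M : TMod S) (i : ℕ) : ℂ :=
  if i = 0 then 0 else trW S M (S.Estar (M.r + i) * S.A * S.Estar (M.r + i - 1) * S.A)

/-- `a*_i(W) = tr_W(E_{t+i} A*)`. -/
def astarW (S : TSetup X) (M : TMod S) (i : ℕ) : ℂ :=
  trW S M (S.E (M.t + i) * S.Astar)

/-- `x*_i(W) = tr_W(E_{t+i} A* E_{t+i-1} A*)`, with `x*_0(W) = 0`. -/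
def xstarW (S : TSetup X) (M : TMod S) (i : ℕ) : ℂ :=
  if i = 0 then 0 else trW S M (S.E (M.t + i) * S.Astar * S.E (M.t + i - 1) * S.Astar)

/-- The polynomials `p_i`: `p_0 = 1`, `p_{-1} = 0`,
`λ p_i = p_{i+1} + a_i(W) p_i + x_i(W) p_{i-1}`. -/
def pW (S : TSetup X) (M : TMod S) : ℕ → Polynomial ℂ
  | 0 => 1
  | 1 => Polynomial.X - Polynomial.C (aW S M 0)
  | (n + 2) =>
      (Polynomial.X - Polynomial.C (aW S M (n + 1))) * pW S M (n + 1)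
        - Polynomial.C (xW S M (n + 1)) * pW S M n

/-- The polynomials `p*_i`: `p*_0 = 1`, `p*_{-1} = 0`,
`λ p*_i = p*_{i+1} + a*_i(W) p*_i + x*_i(W) p*_{i-1}`. -/
def pstarW (S : TSetup X) (M : TMod S) : ℕ → Polynomial ℂ
  | 0 => 1
  | 1 => Polynomial.X - Polynomial.C (astarW S M 0)
  | (n + 2) =>
      (Polynomial.X - Polynomial.C (astarW S M (n + 1))) * pstarW S M (n + 1)
        - Polynomial.C (xstarW S M (n + 1)) * pstarW S M n

/-- The Hermitian inner product `⟨u,v⟩ = Σ_y u_y conj(v_y)` on `ℂ^X`. -/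
def herm (u v : X → ℂ) : ℂ := ∑ y, u y * (starRingEnd ℂ) (v y)

/-- `ν(W)`, the multiplicative inverse of `m_0(W) = tr_W(E_t E*_r)`. -/
def nuW (S : TSetup X) (M : TMod S) : ℂ :=
  (trW S M (S.E M.t * S.Estar M.r))⁻¹

/-- `k_i(W) = ν(W) m*_i(W)` where `m*_i(W) = tr_W(E*_{r+i} E_t)`. -/
def kW (S : TSetup X) (M : TMod S) (i : ℕ) : ℂ :=
  nuW S M * trW S M (S.Estar (M.r + i) * S.E M.t)

/-- `k*_i(W) = ν(W) m_i(W)` where `m_i(W) = tr_W(E_{t+i} E*_r)`. -/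
def kstarW (S : TSetup X) (M : TMod S) (i : ℕ) : ℂ :=
  nuW S M * trW S M (S.E (M.t + i) * S.Estar M.r)

theorem aux_aeval_mul {R : Type*} [Ring R] [Algebra ℂ R] (B F : R) (c : ℂ)
    (h : B * F = c • F) (p : Polynomial ℂ) :
    Polynomial.aeval B p * F = p.eval c • F := by
  induction p using Polynomial.induction_on' with
  | add p q hp hq => simp [add_mul, add_smul, hp, hq]
  | monomial n a =>
    have hn : ∀ n : ℕ, B ^ n * F = c ^ n • F := by
      intro n
      induction n with
      | zero => simp
      | succ n ih => rw [pow_succ, mul_assoc, h, mul_smul_comm, ih, smul_smul, pow_succ, mul_comm]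
    rw [Polynomial.aeval_monomial, mul_assoc, hn, Polynomial.eval_monomial, ← Algebra.smul_def,
      smul_smul]

theorem aux_mem_adjoin {R : Type*} [Ring R] [Algebra ℂ R] (n : ℕ) (F : ℕ → R) (θ : ℕ → ℝ) (B : R)
    (hsum : ∑ i ∈ Finset.range (n + 1), F i = 1)
    (hidem : ∀ i j : ℕ, i ≤ n → j ≤ n → F i * F j = if i = j then F i else 0)
    (hθ : ∀ i j : ℕ, i ≤ n → j ≤ n → θ i = θ j → i = j)
    (hB : B = ∑ i ∈ Finset.range (n + 1), (θ i : ℂ) • F i) (i : ℕ) (hi : i ≤ n) :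
    ∃ p : Polynomial ℂ, F i = Polynomial.aeval B p := by
  have hinj : Set.InjOn (fun j => (θ j : ℂ)) (Finset.range (n + 1) : Finset ℕ) := by
    intro a ha b hb hab
    simp at ha hb
    apply hθ a b (by omega) (by omega)
    simpa using hab
  have hi' : i ∈ Finset.range (n + 1) := by simp; omega
  have hBF : ∀ j ≤ n, B * F j = (θ j : ℂ) • F j := by
    intro j hj
    rw [hB, Finset.sum_mul, Finset.sum_eq_single j]
    · rw [smul_mul_assoc, hidem j j hj hj, if_pos rfl]
    · intro b hb hbj
      simp at hb
      rw [smul_mul_assoc, hidem b j (by omega) hj, if_neg hbj, smul_zero]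
    · intro h
      simp at h; omega
  refine ⟨Lagrange.basis (Finset.range (n + 1)) (fun j => (θ j : ℂ)) i, ?_⟩
  set p := Lagrange.basis (Finset.range (n + 1)) (fun j => (θ j : ℂ)) i with hp
  have : Polynomial.aeval B p = ∑ j ∈ Finset.range (n + 1), Polynomial.aeval B p * F j := by
    rw [← Finset.mul_sum, hsum, mul_one]
  rw [this, Finset.sum_eq_single i]
  · rw [aux_aeval_mul B (F i) _ (hBF i hi), hp, Lagrange.eval_basis_self hinj hi', one_smul]
  · intro b hb hbi
    have hb' : b ≤ n := by simp at hb; omega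
    rw [aux_aeval_mul B (F b) _ (hBF b hb'), hp]
    rw [Lagrange.eval_basis_of_ne (v := fun j => (θ j : ℂ)) (Ne.symm hbi) hb, zero_smul]
  · intro h
    exact absurd hi' h

theorem aux_estar_sum (S : TSetup X) : ∑ i ∈ Finset.range (S.D + 1), S.Estar i = 1 := by
  ext y z
  rw [Matrix.sum_apply]
  rw [Finset.sum_congr rfl (fun i hi => S.hEstar i (by simp at hi; omega) y z)]
  have := S.hDiamLe S.x y
  by_cases h : y = z
  · subst h
    simp
    omega
  · simp [h]

theorem aux_estar_mulVec (S : TSetup X) (i : ℕ) (w : X → ℂ) (y : X) :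
    (S.Estar i *ᵥ w) y = if S.G.dist S.x y = i then w y else 0 := by
  by_cases hi : i ≤ S.D
  · rw [Matrix.mulVec, dotProduct, Finset.sum_eq_single y]
    · rw [S.hEstar i hi]; simp
    · intro b _ hb
      rw [S.hEstar i hi]; simp [Ne.symm hb]
    · simp
  · rw [S.hEstarzero i (by omega)]
    have := S.hDiamLe S.x y
    rw [if_neg (by omega)]; simp

theorem aux_estar_idem (S : TSetup X) (i j : ℕ) :
    S.Estar i * S.Estar j = if i = j then S.Estar i else 0 := by
  apply Matrix.toLin'.injective
  refine LinearMap.ext fun w => ?_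
  funext y
  rw [Matrix.toLin'_apply, ← Matrix.mulVec_mulVec, aux_estar_mulVec, aux_estar_mulVec]
  by_cases h : i = j
  · subst h
    simp [aux_estar_mulVec]
    try (intro h1 h2; exact absurd h2 h1)
  · rw [if_neg h]
    by_cases h1 : S.G.dist S.x y = i
    · simp [h1, h]
    · simp [h1]

theorem aux_E_idem (S : TSetup X) (i : ℕ) : S.E i * S.E i = S.E i := by
  by_cases hi : i ≤ S.D
  · simp [S.hEidem i i hi hi]
  · simp [S.hEzero i (by omega)]

theorem aux_A_mem (S : TSetup X) : S.A ∈ S.T := Algebra.subset_adjoin (by simp)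

theorem aux_Astar_mem (S : TSetup X) : S.Astar ∈ S.T := Algebra.subset_adjoin (by simp)

theorem aux_aeval_mem (S : TSetup X) (B : Matrix X X ℂ) (hB : B ∈ S.T) (p : Polynomial ℂ) :
    Polynomial.aeval B p ∈ S.T := by
  have := Polynomial.aeval_mem_adjoin_singleton (R := ℂ) (p := p) B
  exact (Algebra.adjoin_le (by simpa using hB)) this

theorem aux_E_poly (S : TSetup X) (i : ℕ) :
    ∃ p : Polynomial ℂ, S.E i = Polynomial.aeval S.A p := by
  by_cases hi : i ≤ S.D
  · exact aux_mem_adjoin S.D S.E S.θ S.A S.hEsum S.hEidem S.hθinj S.hAspec i hi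
  · exact ⟨0, by simp [S.hEzero i (by omega)]⟩

theorem aux_Estar_poly (S : TSetup X) (i : ℕ) :
    ∃ p : Polynomial ℂ, S.Estar i = Polynomial.aeval S.Astar p := by
  by_cases hi : i ≤ S.D
  · exact aux_mem_adjoin S.D S.Estar S.θstar S.Astar (aux_estar_sum S)
      (fun i j _ _ => aux_estar_idem S i j) S.hθstarinj S.hAstarspec i hi
  · exact ⟨0, by simp [S.hEstarzero i (by omega)]⟩

theorem aux_E_mem (S : TSetup X) (i : ℕ) : S.E i ∈ S.T := by
  obtain ⟨p, hp⟩ := aux_E_poly S i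
  rw [hp]; exact aux_aeval_mem S _ (aux_A_mem S) p

theorem aux_Estar_mem (S : TSetup X) (i : ℕ) : S.Estar i ∈ S.T := by
  obtain ⟨p, hp⟩ := aux_Estar_poly S i
  rw [hp]; exact aux_aeval_mem S _ (aux_Astar_mem S) p

/-- Dimension of an invariant subspace as a sum over the idempotents. -/
theorem aux_finrank_sum (n : ℕ) (F : ℕ → Matrix X X ℂ) (W : Submodule ℂ (X → ℂ))
    (hsum : ∑ i ∈ Finset.range (n + 1), F i = 1)
    (hidem : ∀ i j : ℕ, i ≤ n → j ≤ n → F i * F j = if i = j then F i else 0)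
    (hW : ∀ i, ∀ w ∈ W, F i *ᵥ w ∈ W) :
    Module.finrank ℂ W = ∑ i ∈ Finset.range (n + 1), Module.finrank ℂ (W.map (F i).mulVecLin) := by
  let Φ : W →ₗ[ℂ] ((i : Fin (n + 1)) → W.map (F i).mulVecLin) :=
    LinearMap.pi fun i => (F i).mulVecLin.submoduleMap W
  have hΦ : ∀ (w : W) (i : Fin (n + 1)), ((Φ w i : W.map (F i).mulVecLin) : X → ℂ) = F i *ᵥ (w : X → ℂ) := by
    intro w i; rfl
  have hs : ∀ w : X → ℂ, ∑ i : Fin (n + 1), F i *ᵥ w = w := by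
    intro w
    rw [Fin.sum_univ_eq_sum_range (fun i => F i *ᵥ w), ← Matrix.sum_mulVec, hsum, Matrix.one_mulVec]
  have hinj : Function.Injective Φ := by
    rw [injective_iff_map_eq_zero]
    intro w hw
    apply Subtype.ext
    rw [← hs w]
    apply Finset.sum_eq_zero
    intro i _
    rw [← hΦ, hw]; rfl
  have hsurj : Function.Surjective Φ := by
    intro g
    have hg : ∀ i, (g i : X → ℂ) ∈ W := by
      intro i
      obtain ⟨w, hw, h⟩ := (g i).2
      rw [← h]; exact hW i w hw
    refine ⟨⟨∑ i, (g i : X → ℂ), Submodule.sum_mem _ fun i _ => hg i⟩, ?_⟩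
    funext j
    apply Subtype.ext
    rw [hΦ]
    change F j *ᵥ (∑ i, (g i : X → ℂ)) = _
    rw [Matrix.mulVec_sum, Finset.sum_eq_single j]
    · obtain ⟨w, hw, h⟩ := (g j).2
      rw [← h]
      change F j *ᵥ (F j *ᵥ w) = F j *ᵥ w
      rw [Matrix.mulVec_mulVec, hidem _ _ (by omega) (by omega), if_pos rfl]
    · intro i _ hij
      obtain ⟨w, hw, h⟩ := (g i).2
      rw [← h]
      change F j *ᵥ (F i *ᵥ w) = 0
      rw [Matrix.mulVec_mulVec, hidem _ _ (by omega) (by omega), if_neg, Matrix.zero_mulVec]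
      intro h; exact hij (Fin.ext h.symm)
    · simp
  rw [(LinearEquiv.ofBijective Φ ⟨hinj, hsurj⟩).finrank_eq, Module.finrank_pi_fintype,
    Fin.sum_univ_eq_sum_range (fun i => Module.finrank ℂ (W.map (F i).mulVecLin))]

theorem aux_thin_dual (S : TSetup X) (M : TMod S) (i : ℕ) :
    Module.finrank ℂ (M.W.map (S.E i).mulVecLin) ≤ 1 := by
  have h1 := aux_finrank_sum S.D S.Estar M.W (aux_estar_sum S)
    (fun i j _ _ => aux_estar_idem S i j) (fun i w hw => M.hWinv _ (aux_Estar_mem S i) w hw)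
  have h2 := aux_finrank_sum S.D S.E M.W S.hEsum S.hEidem
    (fun i w hw => M.hWinv _ (aux_E_mem S i) w hw)
  by_contra hlt
  push Not at hlt
  have hpos : ∀ j, M.t ≤ j ∧ j ≤ M.t + M.d →
      1 ≤ Module.finrank ℂ (M.W.map (S.E j).mulVecLin) := by
    intro j hj
    exact Submodule.one_le_finrank_iff.mpr ((M.ht j).mpr hj)
  have hle : ∀ j, M.t ≤ j ∧ j ≤ M.t + M.d → j ≤ S.D := by
    intro j hj
    by_contra hD
    apply (M.ht j).mpr hj
    rw [S.hEzero j (by omega)]; simp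
  have hi : M.t ≤ i ∧ i ≤ M.t + M.d := by
    rw [← M.ht i]
    intro h
    rw [h] at hlt; simp at hlt
  have e1 : ∑ j ∈ Finset.range (S.D + 1), Module.finrank ℂ (M.W.map (S.Estar j).mulVecLin)
      ≤ M.d + 1 := by
    calc _ ≤ ∑ j ∈ Finset.range (S.D + 1), if j ∈ Finset.Icc M.r (M.r + M.d) then 1 else 0 := by
          apply Finset.sum_le_sum
          intro j _
          split_ifs with h
          · exact M.hthin j
          · rw [Finset.mem_Icc, ← M.hr j, not_not] at h
            rw [h]; simp
      _ ≤ (Finset.Icc M.r (M.r + M.d)).card := by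
          rw [← Finset.sum_filter, Finset.sum_const, smul_eq_mul, mul_one]
          apply Finset.card_le_card
          intro j hj
          exact (Finset.mem_filter.mp hj).2
      _ = M.d + 1 := by simp; omega
  have e2 : M.d + 1 < ∑ j ∈ Finset.range (S.D + 1),
      Module.finrank ℂ (M.W.map (S.E j).mulVecLin) := by
    calc M.d + 1 = ∑ j ∈ Finset.Icc M.t (M.t + M.d), 1 := by simp; omega
      _ < ∑ j ∈ Finset.Icc M.t (M.t + M.d), Module.finrank ℂ (M.W.map (S.E j).mulVecLin) := by
          apply Finset.sum_lt_sum
          · intro j hj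
            exact hpos j (by simpa using hj)
          · exact ⟨i, by simpa using hi, hlt⟩
      _ ≤ _ := by
          apply Finset.sum_le_sum_of_subset
          intro j hj
          have := hle j (by simpa using hj)
          simp; omega
  omega

theorem aux_herm_self {u : X → ℂ} (hu : u ≠ 0) : herm u u ≠ 0 := by
  have h : herm u u = star u ⬝ᵥ u := by
    simp only [herm, dotProduct, Pi.star_apply, mul_comm]; rfl
  rw [h]
  open scoped ComplexOrder in
  exact fun h0 => hu (dotProduct_star_self_eq_zero (R := ℂ) |>.mp h0)

theorem aux_herm_adj (P : Matrix X X ℂ) (hs : Pᵀ = P) (hr : P.map (starRingEnd ℂ) = P)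
    (u v : X → ℂ) : herm (P *ᵥ u) v = herm u (P *ᵥ v) := by
  have hP : ∀ y z, (starRingEnd ℂ) (P y z) = P z y := by
    intro y z
    conv_rhs => rw [← Matrix.transpose_apply P, hs, ← hr, Matrix.map_apply]
  simp only [herm, Matrix.mulVec, dotProduct, map_sum, map_mul, hP, Finset.sum_mul, Finset.mul_sum]
  rw [Finset.sum_comm]
  refine Finset.sum_congr rfl fun y _ => Finset.sum_congr rfl fun z _ => by ring

theorem aux_span {U : Submodule ℂ (X → ℂ)} (hU : Module.finrank ℂ U ≤ 1) {u : X → ℂ}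
    (hu : u ∈ U) (hu0 : u ≠ 0) (w : X → ℂ) (hw : w ∈ U) : ∃ c : ℂ, w = c • u := by
  obtain ⟨g, hg⟩ := finrank_le_one_iff.mp hU
  obtain ⟨a, ha⟩ := hg ⟨u, hu⟩
  obtain ⟨b, hb⟩ := hg ⟨w, hw⟩
  have ha' : a • (g : X → ℂ) = u := congrArg Subtype.val ha
  have hb' : b • (g : X → ℂ) = w := congrArg Subtype.val hb
  have ha0 : a ≠ 0 := by
    rintro rfl
    apply hu0; rw [← ha']; simp
  exact ⟨b / a, by rw [← ha', ← hb', smul_smul, div_mul_cancel₀ _ ha0]⟩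

theorem aux_trace (S : TSetup X) (M : TMod S) (P Q : Matrix X X ℂ) (hP : P ∈ S.T) (hQ : Q ∈ S.T)
    (hPs : Pᵀ = P) (hPr : P.map (starRingEnd ℂ) = P) (hPi : P * P = P)
    (hQs : Qᵀ = Q) (hQr : Q.map (starRingEnd ℂ) = Q) (hQi : Q * Q = Q)
    (h1 : Module.finrank ℂ (M.W.map P.mulVecLin) ≤ 1)
    (u : X → ℂ) (hu : u ∈ M.W.map P.mulVecLin) (hu0 : u ≠ 0) :
    herm (Q *ᵥ u) (Q *ᵥ u) = herm u u * trW S M (Q * P) := by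
  have hPu : P *ᵥ u = u := by
    obtain ⟨w, _, rfl⟩ := hu
    change P *ᵥ (P *ᵥ w) = P *ᵥ w
    rw [Matrix.mulVec_mulVec, hPi]
  have huW : u ∈ M.W := by
    obtain ⟨w, hw, rfl⟩ := hu
    exact M.hWinv P hP w hw
  have hn := aux_herm_self hu0
  let f : M.W →ₗ[ℂ] ℂ :=
    { toFun := fun w => herm (w : X → ℂ) u / herm u u
      map_add' := by
        intro a b
        simp [herm, add_mul, Finset.sum_add_distrib, add_div]
      map_smul' := by
        intro c a
        simp [herm, mul_assoc, ← Finset.mul_sum, mul_div_assoc] }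
  have hact : actW S M (Q * P) = f.smulRight ⟨Q *ᵥ u, M.hWinv Q hQ u huW⟩ := by
    have hinv : ∀ w ∈ M.W, (Q * P).mulVecLin w ∈ M.W := fun w hw =>
      M.hWinv _ (mul_mem hQ hP) w hw
    rw [actW, dif_pos hinv]
    refine LinearMap.ext fun w => Subtype.ext ?_
    change (Q * P) *ᵥ (w : X → ℂ) = (herm (w : X → ℂ) u / herm u u) • (Q *ᵥ u)
    obtain ⟨c, hc⟩ := aux_span h1 hu hu0 (P *ᵥ (w : X → ℂ)) ⟨w, w.2, rfl⟩
    have : herm (w : X → ℂ) u = c * herm u u := by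
      rw [← hPu, ← aux_herm_adj P hPs hPr, hc, hPu]
      simp [herm, mul_assoc, ← Finset.mul_sum]
    rw [this, mul_div_cancel_right₀ _ hn, ← Matrix.mulVec_mulVec, hc, Matrix.mulVec_smul]
  rw [trW, hact, LinearMap.trace_smulRight]
  change _ = herm u u * (herm (Q *ᵥ u) u / herm u u)
  rw [mul_div_cancel₀ _ hn, aux_herm_adj Q hQs hQr, Matrix.mulVec_mulVec, hQi,
    aux_herm_adj Q hQs hQr]

theorem aux_Estar_symm (S : TSetup X) (i : ℕ) : (S.Estar i)ᵀ = S.Estar i := by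
  by_cases hi : i ≤ S.D
  · ext y z
    rw [Matrix.transpose_apply, S.hEstar i hi, S.hEstar i hi]
    by_cases h : y = z
    · subst h; rfl
    · simp [h, Ne.symm h]
  · simp [S.hEstarzero i (by omega)]

theorem aux_Estar_real (S : TSetup X) (i : ℕ) :
    (S.Estar i).map (starRingEnd ℂ) = S.Estar i := by
  by_cases hi : i ≤ S.D
  · ext y z
    rw [Matrix.map_apply, S.hEstar i hi]
    split_ifs <;> simp
  · simp [S.hEstarzero i (by omega)]

/-- Tridiagonality of `A` with respect to the dual idempotents. -/
theorem aux_tridiag (S : TSetup X) (w : X → ℂ) (k : ℕ) (hw : ∀ j, k < j → S.Estar j *ᵥ w = 0)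
    (j : ℕ) (hj : k + 1 < j) : S.Estar j *ᵥ (S.A *ᵥ w) = 0 := by
  funext y
  rw [aux_estar_mulVec]
  split_ifs with h
  · rw [Matrix.mulVec, dotProduct]
    apply Finset.sum_eq_zero
    intro z _
    rw [S.hA]
    split_ifs with hadj
    · have hd : S.G.dist S.x y ≤ S.G.dist S.x z + S.G.dist z y := S.hGconn.dist_triangle
      have h1 : S.G.dist z y = 1 := SimpleGraph.dist_eq_one_iff_adj.mpr hadj.symm
      have := congrFun (hw (S.G.dist S.x z) (by omega)) z
      rw [aux_estar_mulVec, if_pos rfl] at this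
      rw [this]; simp
    · simp
  · rfl

theorem aux_ker_inv (S : TSetup X) (t : ℕ) (w : X → ℂ) (h : S.E t *ᵥ w = 0) :
    S.E t *ᵥ (S.A *ᵥ w) = 0 := by
  obtain ⟨p, hp⟩ := aux_E_poly S t
  have hc : S.E t * S.A = S.A * S.E t := by
    rw [hp]
    have := Polynomial.aeval_X (R := ℂ) S.A
    conv_lhs => rw [← this]
    conv_rhs => rw [← this]
    simp only [Polynomial.aeval_X]
    rw [← Polynomial.aeval_X (R := ℂ) S.A]
    simp only [Polynomial.aeval_X]
    have h2 : Polynomial.aeval S.A (p * Polynomial.X) = Polynomial.aeval S.A (Polynomial.X * p) := by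
      rw [mul_comm]
    simpa using h2
  rw [Matrix.mulVec_mulVec, hc, ← Matrix.mulVec_mulVec, h, Matrix.mulVec_zero]

theorem aux_inv_of_gen (S : TSetup X) (U : Submodule ℂ (X → ℂ))
    (hA : ∀ w ∈ U, S.A *ᵥ w ∈ U) (hAs : ∀ w ∈ U, S.Astar *ᵥ w ∈ U) :
    ∀ B ∈ S.T, ∀ w ∈ U, B *ᵥ w ∈ U := by
  intro B hB
  induction hB using Algebra.adjoin_induction with
  | mem B hB =>
    rcases hB with rfl | hB
    · exact hA
    · rw [Set.mem_singleton_iff] at hB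
      subst hB; exact hAs
  | algebraMap c =>
    intro w hw
    rw [Algebra.algebraMap_eq_smul_one, Matrix.smul_mulVec, Matrix.one_mulVec]
    exact U.smul_mem c hw
  | add B C _ _ hB hC =>
    intro w hw
    rw [Matrix.add_mulVec]
    exact U.add_mem (hB w hw) (hC w hw)
  | mul B C _ _ hB hC =>
    intro w hw
    rw [← Matrix.mulVec_mulVec]
    exact hB _ (hC w hw)

theorem aux_decomp (S : TSetup X) (w : X → ℂ) :
    w = ∑ j ∈ Finset.range (S.D + 1), S.Estar j *ᵥ w := by
  rw [← Matrix.sum_mulVec, aux_estar_sum, Matrix.one_mulVec]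

theorem aux_below (S : TSetup X) (M : TMod S) (j : ℕ) (hj : ¬ (M.r ≤ j ∧ j ≤ M.r + M.d))
    (w : X → ℂ) (hw : w ∈ M.W) : S.Estar j *ᵥ w = 0 := by
  rw [← M.hr j, not_not] at hj
  have : S.Estar j *ᵥ w ∈ M.W.map (S.Estar j).mulVecLin := ⟨w, hw, rfl⟩
  rw [hj] at this
  simpa using this

theorem aux_ne (S : TSetup X) (M : TMod S) (v : X → ℂ)
    (hv : v ∈ M.W.map (S.Estar M.r).mulVecLin) (hv0 : v ≠ 0) : S.E M.t *ᵥ v ≠ 0 := by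
  intro hE
  have hvW : v ∈ M.W := by
    obtain ⟨w, hw, rfl⟩ := hv
    exact M.hWinv _ (aux_Estar_mem S _) w hw
  have hvr : S.Estar M.r *ᵥ v = v := by
    obtain ⟨w, _, rfl⟩ := hv
    change S.Estar M.r *ᵥ (S.Estar M.r *ᵥ w) = S.Estar M.r *ᵥ w
    rw [Matrix.mulVec_mulVec, aux_estar_idem, if_pos rfl]
  have key : ∀ k : ℕ, ∀ j ≤ M.r + k, ∀ w ∈ M.W, S.E M.t *ᵥ (S.Estar j *ᵥ w) = 0 := by
    intro k
    induction k with
    | zero =>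
      intro j hj w hw
      rcases Nat.lt_or_ge j M.r with h | h
      · rw [aux_below S M j (by omega) w hw, Matrix.mulVec_zero]
      · obtain rfl : j = M.r := by omega
        obtain ⟨c, hc⟩ := aux_span (M.hthin M.r) hv hv0 (S.Estar M.r *ᵥ w) ⟨w, hw, rfl⟩
        rw [hc, Matrix.mulVec_smul, hE, smul_zero]
    | succ k ih =>
      let U : Submodule ℂ (X → ℂ) :=
        { carrier := {w | w ∈ M.W ∧ ∀ j, M.r + k < j → S.Estar j *ᵥ w = 0}
          add_mem' := by
            intro a b ha hb
            refine ⟨M.W.add_mem ha.1 hb.1, fun j hj => ?_⟩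
            rw [Matrix.mulVec_add, ha.2 j hj, hb.2 j hj, add_zero]
          zero_mem' := ⟨M.W.zero_mem, fun j _ => Matrix.mulVec_zero _⟩
          smul_mem' := by
            intro c a ha
            refine ⟨M.W.smul_mem c ha.1, fun j hj => ?_⟩
            rw [Matrix.mulVec_smul, ha.2 j hj, smul_zero] }
      have hAs : ∀ w ∈ U, S.Astar *ᵥ w ∈ U := by
        intro w hw
        refine ⟨M.hWinv _ (aux_Astar_mem S) w hw.1, fun j hj => ?_⟩
        funext y
        rw [aux_estar_mulVec]
        split_ifs with h
        · rw [Matrix.mulVec, dotProduct]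
          apply Finset.sum_eq_zero
          intro z _
          rw [S.hAstar]
          split_ifs with hyz
          · subst hyz
            have := congrFun (hw.2 j hj) y
            rw [aux_estar_mulVec, if_pos h] at this
            rw [this]; simp
          · simp
        · rfl
      by_cases hA : ∀ w ∈ U, S.A *ᵥ w ∈ U
      · have hinv := aux_inv_of_gen S U hA hAs
        rcases M.hWirr U (fun w hw => hw.1) hinv with h | h
        · exfalso
          have : v ∈ U := by
            refine ⟨hvW, fun j hj => ?_⟩
            rw [← hvr, Matrix.mulVec_mulVec, aux_estar_idem, if_neg (by omega), Matrix.zero_mulVec]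
          rw [h] at this
          exact hv0 (by simpa using this)
        · intro j hj w hw
          rcases Nat.lt_or_ge (M.r + k) j with h' | h'
          · have hwU : w ∈ U := by rw [h]; exact hw
            rw [hwU.2 j h', Matrix.mulVec_zero]
          · exact ih j h' w hw
      · push Not at hA
        obtain ⟨w₀, hw₀, hAw⟩ := hA
        have hAW : S.A *ᵥ w₀ ∈ M.W := M.hWinv _ (aux_A_mem S) w₀ hw₀.1
        set z := S.A *ᵥ w₀ with hz
        have htri : ∀ j, M.r + k + 1 < j → S.Estar j *ᵥ z = 0 :=
          fun j hj => aux_tridiag S w₀ (M.r + k) hw₀.2 j hj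
        have hne : S.Estar (M.r + k + 1) *ᵥ z ≠ 0 := by
          intro h0
          apply hAw
          refine ⟨hAW, fun j hj => ?_⟩
          rcases Nat.lt_or_ge (M.r + k + 1) j with h' | h'
          · exact htri j h'
          · obtain rfl : j = M.r + k + 1 := by omega
            exact h0
        have hEw₀ : S.E M.t *ᵥ w₀ = 0 := by
          rw [aux_decomp S w₀, Matrix.mulVec_sum]
          apply Finset.sum_eq_zero
          intro j _
          rcases Nat.lt_or_ge (M.r + k) j with h' | h'
          · rw [hw₀.2 j h', Matrix.mulVec_zero]
          · exact ih j h' w₀ hw₀.1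
        have hEz : S.E M.t *ᵥ z = 0 := aux_ker_inv S M.t w₀ hEw₀
        have hEtop : S.E M.t *ᵥ (S.Estar (M.r + k + 1) *ᵥ z) = 0 := by
          have hs := hEz
          rw [aux_decomp S z, Matrix.mulVec_sum, Finset.sum_eq_single (M.r + k + 1)] at hs
          · exact hs
          · intro j _ hj
            rcases Nat.lt_or_ge (M.r + k) j with h' | h'
            · rw [htri j (by omega), Matrix.mulVec_zero]
            · exact ih j h' z hAW
          · intro hD
            simp at hD
            rw [S.hEstarzero _ (by omega), Matrix.zero_mulVec, Matrix.mulVec_zero]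
        intro j hj w hw
        rcases Nat.lt_or_ge (M.r + k) j with h' | h'
        · obtain rfl : j = M.r + k + 1 := by omega
          obtain ⟨c, hc⟩ := aux_span (M.hthin (M.r + k + 1)) (u := S.Estar (M.r + k + 1) *ᵥ z)
            ⟨z, hAW, rfl⟩ hne (S.Estar (M.r + k + 1) *ᵥ w) ⟨w, hw, rfl⟩
          rw [hc, Matrix.mulVec_smul, hEtop, smul_zero]
        · exact ih j h' w hw
  apply (M.ht M.t).mpr ⟨le_refl _, by omega⟩
  rw [Submodule.eq_bot_iff]
  rintro _ ⟨w, hw, rfl⟩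
  change S.E M.t *ᵥ w = 0
  rw [aux_decomp S w, Matrix.mulVec_sum]
  apply Finset.sum_eq_zero
  intro j _
  exact key j j (by omega) w hw

/-- For nonzero `u ∈ E_t W` and nonzero `v ∈ E*_r W` and `0 ≤ i ≤ d`:
`‖E*_{r+i} u‖² = ‖u‖² k_i(W)/ν(W)` and `‖E_{t+i} v‖² = ‖v‖² k*_i(W)/ν(W)`. -/
theorem stmt14 (S : TSetup X) (M : TMod S) (hd : 0 < M.d) :
    ∀ u ∈ M.W.map (S.E M.t).mulVecLin, u ≠ 0 →
    ∀ v ∈ M.W.map (S.Estar M.r).mulVecLin, v ≠ 0 →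
    ∀ i ≤ M.d,
      herm (S.Estar (M.r + i) *ᵥ u) (S.Estar (M.r + i) *ᵥ u) =
        herm u u * kW S M i / nuW S M ∧
      herm (S.E (M.t + i) *ᵥ v) (S.E (M.t + i) *ᵥ v) =
        herm v v * kstarW S M i / nuW S M := by
  intro u hu hu0 v hv hv0 i hi
  have T2 : ∀ i, herm (S.E (M.t + i) *ᵥ v) (S.E (M.t + i) *ᵥ v) =
      herm v v * trW S M (S.E (M.t + i) * S.Estar M.r) := fun i =>
    aux_trace S M (S.Estar M.r) (S.E (M.t + i)) (aux_Estar_mem S _) (aux_E_mem S _)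
      (aux_Estar_symm S _) (aux_Estar_real S _) (by rw [aux_estar_idem, if_pos rfl])
      (S.hEsymm _) (S.hEreal _) (aux_E_idem S _) (M.hthin _) v hv hv0
  have T1 : herm (S.Estar (M.r + i) *ᵥ u) (S.Estar (M.r + i) *ᵥ u) =
      herm u u * trW S M (S.Estar (M.r + i) * S.E M.t) :=
    aux_trace S M (S.E M.t) (S.Estar (M.r + i)) (aux_E_mem S _) (aux_Estar_mem S _)
      (S.hEsymm _) (S.hEreal _) (aux_E_idem S _)
      (aux_Estar_symm S _) (aux_Estar_real S _) (by rw [aux_estar_idem, if_pos rfl])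
      (aux_thin_dual S M _) u hu hu0
  have hm : trW S M (S.E M.t * S.Estar M.r) ≠ 0 := by
    intro h0
    have h := T2 0
    rw [Nat.add_zero, h0, mul_zero] at h
    exact aux_herm_self (aux_ne S M v hv hv0) h
  have hnu : nuW S M ≠ 0 := inv_ne_zero hm
  refine ⟨?_, ?_⟩
  · rw [T1, kW]
    field_simp
  · rw [T2 i, kstarW]
    field_simp
end
end

section
/- Let u be a nonzero vector in E_tW and v a nonzero vector in E*_rW. Then for 0 ≤ i, j ≤ d, ⟨E*_{r+i}u, E_{t+j}v⟩ = u_i(θ_{t+j})·k_i(W)·k*_j(W)·⟨u,v⟩/ν(W). -/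
open Matrix
open scoped Classical

noncomputable section

variable {X : Type*} [Fintype X] [DecidableEq X]

/-! ### Helper lemmas -/

lemma herm_add_left (a b c : X → ℂ) : herm (a + b) c = herm a c + herm b c := by
  simp [herm, add_mul, Finset.sum_add_distrib]

lemma herm_smul_left (k : ℂ) (a c : X → ℂ) : herm (k • a) c = k * herm a c := by
  simp [herm, Finset.mul_sum, mul_assoc]

lemma herm_smul_right (k : ℂ) (a c : X → ℂ) :
    herm a (k • c) = (starRingEnd ℂ) k * herm a c := by
  simp only [herm, Finset.mul_sum, Pi.smul_apply, smul_eq_mul, map_mul]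
  exact Finset.sum_congr rfl fun _ _ => by ring

lemma herm_conj (a b : X → ℂ) : (starRingEnd ℂ) (herm a b) = herm b a := by
  simp only [herm, map_sum, map_mul, Complex.conj_conj]
  exact Finset.sum_congr rfl fun _ _ => by ring

lemma herm_zero_left (b : X → ℂ) : herm 0 b = 0 := by simp [herm]

lemma herm_zero_right (b : X → ℂ) : herm b 0 = 0 := by simp [herm]

lemma herm_self_eq_zero {a : X → ℂ} (h : herm a a = 0) : a = 0 := by
  have h1 : ((∑ y, Complex.normSq (a y) : ℝ) : ℂ) = 0 := by
    rw [← h]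
    simp [herm, Complex.mul_conj]
  have h2 : ∑ y, Complex.normSq (a y) = 0 := by exact_mod_cast h1
  rw [Finset.sum_eq_zero_iff_of_nonneg (fun _ _ => Complex.normSq_nonneg _)] at h2
  ext y
  simpa using h2 y (Finset.mem_univ y)

/-- a matrix with `B z y = conj (B y z)` is self-adjoint for `herm`. -/
lemma herm_mulVec {B : Matrix X X ℂ} (hB : ∀ y z, (starRingEnd ℂ) (B z y) = B y z)
    (a b : X → ℂ) : herm (B *ᵥ a) b = herm a (B *ᵥ b) := by
  simp only [herm, mulVec, dotProduct, map_sum, map_mul, Finset.sum_mul, Finset.mul_sum]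
  rw [Finset.sum_comm]
  refine Finset.sum_congr rfl fun y _ => Finset.sum_congr rfl fun z _ => ?_
  rw [hB]; ring

namespace TSetup

lemma Estar_apply (S : TSetup X) (m : ℕ) (y z : X) :
    S.Estar m y z = if y = z ∧ S.G.dist S.x y = m then 1 else 0 := by
  by_cases h : m ≤ S.D
  · exact S.hEstar m h y z
  · rw [S.hEstarzero m (by omega), if_neg]
    · rfl
    · rintro ⟨-, h2⟩
      have := S.hDiamLe S.x y
      omega

lemma Estar_mulVec (S : TSetup X) (m : ℕ) (w : X → ℂ) (y : X) :
    (S.Estar m *ᵥ w) y = if S.G.dist S.x y = m then w y else 0 := by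
  simp only [mulVec, dotProduct, Estar_apply]
  rw [Finset.sum_eq_single y]
  · by_cases h : S.G.dist S.x y = m <;> simp [h]
  · intro b _ hb
    simp [hb.symm]
  · simp

lemma Estar_herm (S : TSetup X) (m : ℕ) (y z : X) :
    (starRingEnd ℂ) (S.Estar m z y) = S.Estar m y z := by
  simp only [Estar_apply]
  by_cases h : y = z
  · subst h; split_ifs <;> simp
  · simp [h, Ne.symm h]

lemma E_herm (S : TSetup X) (m : ℕ) (y z : X) :
    (starRingEnd ℂ) (S.E m z y) = S.E m y z := by
  have h1 := congrFun (congrFun (S.hEreal m) z) y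
  have h2 := congrFun (congrFun (S.hEsymm m) y) z
  simp only [Matrix.map_apply] at h1
  rw [h1]; exact h2

lemma A_herm (S : TSetup X) (y z : X) :
    (starRingEnd ℂ) (S.A z y) = S.A y z := by
  simp only [S.hA, S.G.adj_comm z y]
  split_ifs <;> simp

lemma Estar_Estar (S : TSetup X) (m n : ℕ) (w : X → ℂ) :
    S.Estar m *ᵥ (S.Estar n *ᵥ w) = if m = n then S.Estar n *ᵥ w else 0 := by
  ext y
  rw [Estar_mulVec]
  by_cases h : m = n
  · subst h
    simp only [if_true, Estar_mulVec]; split_ifs <;> rfl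
  · simp only [if_neg h, Estar_mulVec]
    split_ifs with h1 h2
    · omega
    · rfl
    · rfl

lemma E_idem (S : TSetup X) (m : ℕ) : S.E m * S.E m = S.E m := by
  by_cases h : m ≤ S.D
  · simp [S.hEidem m m h h]
  · simp [S.hEzero m (by omega)]

lemma A_E (S : TSetup X) (m : ℕ) : S.A * S.E m = (S.θ m : ℂ) • S.E m := by
  by_cases h : m ≤ S.D
  · rw [S.hAspec, Finset.sum_mul, Finset.sum_eq_single m]
    · rw [smul_mul_assoc, E_idem]
    · intro b hb hbm
      rw [smul_mul_assoc, S.hEidem b m (by simp at hb; omega) h, if_neg hbm, smul_zero]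
    · intro hout; simp at hout; omega
  · simp [S.hEzero m (by omega)]

/-- tridiagonality -/
lemma A_tri (S : TSetup X) (n : ℕ) (w : X → ℂ) (hw : S.Estar n *ᵥ w = w) :
    S.A *ᵥ w = S.Estar (n + 1) *ᵥ (S.A *ᵥ w) + S.Estar n *ᵥ (S.A *ᵥ w)
      + (if n = 0 then 0 else S.Estar (n - 1) *ᵥ (S.A *ᵥ w)) := by
  have key : ∀ y, (S.A *ᵥ w) y ≠ 0 →
      S.G.dist S.x y = n + 1 ∨ S.G.dist S.x y = n ∨ S.G.dist S.x y + 1 = n := by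
    intro y hy
    obtain ⟨z, -, hz⟩ := Finset.exists_ne_zero_of_sum_ne_zero hy
    have h1 : S.A y z ≠ 0 := left_ne_zero_of_mul hz
    have h2 : w z ≠ 0 := right_ne_zero_of_mul hz
    have hadj : S.G.Adj y z := by
      by_contra h; exact h1 (by rw [S.hA, if_neg h])
    have hdz : S.G.dist S.x z = n := by
      by_contra h
      apply h2
      rw [← hw, Estar_mulVec, if_neg h]
    have d1 : S.G.dist y z = 1 := SimpleGraph.dist_eq_one_iff_adj.mpr hadj
    have d2 : S.G.dist z y = 1 := SimpleGraph.dist_eq_one_iff_adj.mpr hadj.symm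
    have t1 := S.hGconn.dist_triangle (u := S.x) (v := y) (w := z)
    have t2 := S.hGconn.dist_triangle (u := S.x) (v := z) (w := y)
    omega
  ext y
  by_cases hy : (S.A *ᵥ w) y = 0
  · by_cases hn : n = 0
    · simp only [if_pos hn, Pi.add_apply, Estar_mulVec, hy]; simp
    · simp only [if_neg hn, Pi.add_apply, Estar_mulVec, hy]; simp
  · by_cases hn : n = 0
    · rcases key y hy with h | h | h
      · simp only [if_pos hn, Pi.add_apply, Estar_mulVec]
        rw [if_pos h, if_neg (by omega)]; simp
      · simp only [if_pos hn, Pi.add_apply, Estar_mulVec]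
        rw [if_neg (by omega), if_pos h]; simp
      · omega
    · simp only [if_neg hn, Pi.add_apply, Estar_mulVec]
      rcases key y hy with h | h | h
      · rw [if_pos h, if_neg (by omega), if_neg (by omega)]; simp
      · rw [if_neg (by omega), if_pos h, if_neg (by omega)]; simp
      · rw [if_neg (by omega), if_neg (by omega), if_pos (by omega)]; simp

end TSetup

/-- orthogonal idempotents are polynomials in the generator. -/
lemma idem_mem_adjoin (D : ℕ) (A : Matrix X X ℂ) (E : ℕ → Matrix X X ℂ) (θ : ℕ → ℝ)
    (hsum : ∑ i ∈ Finset.range (D + 1), E i = 1)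
    (hid : ∀ i j : ℕ, i ≤ D → j ≤ D → E i * E j = if i = j then E i else 0)
    (hinj : ∀ i j : ℕ, i ≤ D → j ≤ D → θ i = θ j → i = j)
    (hA : A = ∑ i ∈ Finset.range (D + 1), (θ i : ℂ) • E i) (m : ℕ) (hm : m ≤ D) :
    E m ∈ Algebra.adjoin ℂ {A} := by
  have hAE : ∀ i ≤ D, A * E i = (θ i : ℂ) • E i := by
    intro i hi
    rw [hA, Finset.sum_mul, Finset.sum_eq_single i]
    · rw [smul_mul_assoc, hid i i hi hi, if_pos rfl]
    · intro b hb hbm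
      rw [smul_mul_assoc, hid b i (by simp at hb; omega) hi, if_neg hbm, smul_zero]
    · intro hout; simp at hout; omega
  have hp : ∀ (p : Polynomial ℂ), ∀ i ≤ D,
      Polynomial.aeval A p * E i = (p.eval (θ i : ℂ)) • E i := by
    intro p i hi
    induction p using Polynomial.induction_on' with
    | add p q hp hq => simp [add_mul, hp, hq, add_smul]
    | monomial n a =>
      have : ∀ n : ℕ, A ^ n * E i = (θ i : ℂ) ^ n • E i := by
        intro n
        induction n with
        | zero => simp
        | succ n ih => rw [pow_succ, mul_assoc, hAE i hi, mul_smul_comm, ih, smul_smul, pow_succ,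
            mul_comm]
      rw [Polynomial.aeval_monomial, mul_assoc, this, Polynomial.eval_monomial,
        ← Algebra.smul_def, smul_smul]
  have hinj' : Set.InjOn (fun i => (θ i : ℂ)) (Finset.range (D + 1) : Set ℕ) := by
    intro a ha b hb hab
    simp at ha hb
    exact hinj a b (by omega) (by omega) (Complex.ofReal_injective hab)
  have hmem : m ∈ Finset.range (D + 1) := by simp; omega
  have hE : E m = Polynomial.aeval A
      (Lagrange.basis (Finset.range (D + 1)) (fun i => (θ i : ℂ)) m) := by
    rw [← mul_one (Polynomial.aeval A _), ← hsum, Finset.mul_sum, Finset.sum_eq_single m]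
    · rw [hp _ m hm]
      have := Lagrange.eval_basis_self hinj' hmem
      rw [this, one_smul]
    · intro b hb hbm
      rw [hp _ b (by simp at hb; omega)]
      have := Lagrange.eval_basis_of_ne (v := fun i => (θ i : ℂ)) (Ne.symm hbm) hb
      rw [this, zero_smul]
    · intro h; exact absurd hmem h
  rw [hE]
  exact Polynomial.aeval_mem_adjoin_singleton ℂ A

namespace TSetup

lemma E_mem_T (S : TSetup X) (m : ℕ) : S.E m ∈ S.T := by
  by_cases h : m ≤ S.D
  · exact Algebra.adjoin_mono (by simp)
      (idem_mem_adjoin S.D S.A S.E S.θ S.hEsum S.hEidem S.hθinj S.hAspec m h)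
  · rw [S.hEzero m (by omega)]; exact zero_mem _

lemma Estar_mul (S : TSetup X) (m n : ℕ) :
    S.Estar m * S.Estar n = if m = n then S.Estar m else 0 := by
  apply Matrix.ext_of_mulVec_single
  intro i
  rw [← mulVec_mulVec, Estar_Estar]
  split_ifs with h
  · rw [h]
  · rw [zero_mulVec]

lemma Estar_sum (S : TSetup X) : ∑ i ∈ Finset.range (S.D + 1), S.Estar i = 1 := by
  ext y z
  rw [Matrix.sum_apply, Finset.sum_eq_single (S.G.dist S.x y)]
  · simp [Estar_apply, Matrix.one_apply]
  · intro b _ hb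
    simp [Estar_apply, hb.symm]
  · intro h
    have := S.hDiamLe S.x y
    simp at h; omega

lemma Estar_mem_T (S : TSetup X) (m : ℕ) : S.Estar m ∈ S.T := by
  by_cases h : m ≤ S.D
  · exact Algebra.adjoin_mono (by simp)
      (idem_mem_adjoin S.D S.Astar S.Estar S.θstar S.Estar_sum
        (fun i j _ _ => S.Estar_mul i j) S.hθstarinj S.hAstarspec m h)
  · rw [S.hEstarzero m (by omega)]; exact zero_mem _

lemma A_mem_T (S : TSetup X) : S.A ∈ S.T := Algebra.subset_adjoin (by simp)

end TSetup

lemma actW_mul (S : TSetup X) (M : TMod S) (B C : Matrix X X ℂ) (hB : B ∈ S.T) (hC : C ∈ S.T) :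
    actW S M (B * C) = actW S M B * actW S M C := by
  unfold actW
  have h1 : ∀ B ∈ S.T, ∀ w ∈ M.W, B.mulVecLin w ∈ M.W := M.hWinv
  rw [dif_pos (h1 _ (mul_mem hB hC)), dif_pos (h1 _ hB), dif_pos (h1 _ hC)]
  ext w : 2
  simp

lemma trW_comm (S : TSetup X) (M : TMod S) (B C : Matrix X X ℂ) (hB : B ∈ S.T) (hC : C ∈ S.T) :
    trW S M (B * C) = trW S M (C * B) := by
  unfold trW
  rw [actW_mul S M B C hB hC, actW_mul S M C B hC hB, LinearMap.trace_mul_comm]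

lemma thin_line (S : TSetup X) (M : TMod S) (m : ℕ) (w : X → ℂ) (hw : w ∈ M.W)
    (hEw : S.Estar m *ᵥ w = w) (hw0 : w ≠ 0) (z : X → ℂ) (hz : z ∈ M.W) :
    ∃ c : ℂ, S.Estar m *ᵥ z = c • w := by
  have hmem : ∀ z ∈ M.W, S.Estar m *ᵥ z ∈ M.W.map (S.Estar m).mulVecLin :=
    fun z hz => ⟨z, hz, rfl⟩
  obtain ⟨v0, hv0⟩ := finrank_le_one_iff.mp (M.hthin m)
  have h1 := hmem w hw
  rw [hEw] at h1
  obtain ⟨c, hc⟩ := hv0 ⟨w, h1⟩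
  obtain ⟨e, he⟩ := hv0 ⟨_, hmem z hz⟩
  have hc' : c • (v0 : X → ℂ) = w := congrArg Subtype.val hc
  have he' : e • (v0 : X → ℂ) = S.Estar m *ᵥ z := congrArg Subtype.val he
  have hcne : c ≠ 0 := by
    rintro rfl
    exact hw0 (by rw [← hc', zero_smul])
  refine ⟨e * c⁻¹, ?_⟩
  rw [← he', ← hc', smul_smul, mul_assoc, inv_mul_cancel₀ hcne, mul_one]

lemma trace_line (S : TSetup X) (M : TMod S) (m : ℕ) (B : Matrix X X ℂ) (hB : B ∈ S.T)
    (w : X → ℂ) (hw : w ∈ M.W) (hEw : S.Estar m *ᵥ w = w) :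
    S.Estar m *ᵥ (B *ᵥ w) = trW S M (S.Estar m * B) • w := by
  by_cases hw0 : w = 0
  · simp [hw0]
  have hn : herm w w ≠ 0 := fun h => hw0 (herm_self_eq_zero h)
  have hT : S.Estar m * B ∈ S.T := mul_mem (S.Estar_mem_T m) hB
  let φ : M.W →ₗ[ℂ] ℂ :=
    { toFun := fun z => herm (S.Estar m *ᵥ (B *ᵥ (z : X → ℂ))) w / herm w w
      map_add' := by
        intro a b
        simp only [Submodule.coe_add, mulVec_add, herm_add_left, add_div]
      map_smul' := by
        intro k a
        simp only [Submodule.coe_smul, mulVec_smul, herm_smul_left, RingHom.id_apply,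
          smul_eq_mul, mul_div_assoc] }
  have hf : ∀ z ∈ M.W, S.Estar m *ᵥ (B *ᵥ z) =
      (herm (S.Estar m *ᵥ (B *ᵥ z)) w / herm w w) • w := by
    intro z hz
    obtain ⟨c, hc⟩ := thin_line S M m w hw hEw hw0 (B *ᵥ z) (M.hWinv B hB z hz)
    rw [hc, herm_smul_left, mul_div_assoc, div_self hn, mul_one]
  have hact : actW S M (S.Estar m * B) = φ.smulRight ⟨w, hw⟩ := by
    unfold actW
    have h1 : ∀ w ∈ M.W, (S.Estar m * B).mulVecLin w ∈ M.W := M.hWinv _ hT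
    rw [dif_pos h1]
    ext z : 2
    simp only [LinearMap.restrict_coe_apply, LinearMap.smulRight_apply, Submodule.coe_smul,
      mulVecLin_apply]
    rw [← mulVec_mulVec]
    exact hf z z.2
  unfold trW
  rw [hact, LinearMap.trace_smulRight]
  exact hf w hw

/-- the vectors `v_k = E*_{r+k} A v_{k-1}`. -/
def vseq (S : TSetup X) (M : TMod S) (v : X → ℂ) : ℕ → X → ℂ
  | 0 => v
  | (k + 1) => S.Estar (M.r + (k + 1)) *ᵥ (S.A *ᵥ vseq S M v k)

lemma vseq_mem (S : TSetup X) (M : TMod S) (v : X → ℂ) (hv : v ∈ M.W)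
    (k : ℕ) : vseq S M v k ∈ M.W := by
  induction k with
  | zero => exact hv
  | succ k ih => exact M.hWinv _ (S.Estar_mem_T _) _ (M.hWinv _ S.A_mem_T _ ih)

lemma vseq_E (S : TSetup X) (M : TMod S) (v : X → ℂ) (hEv : S.Estar M.r *ᵥ v = v)
    (k : ℕ) : S.Estar (M.r + k) *ᵥ vseq S M v k = vseq S M v k := by
  cases k with
  | zero => exact hEv
  | succ k => rw [vseq, TSetup.Estar_Estar, if_pos rfl]

lemma vseq_A (S : TSetup X) (M : TMod S) (v : X → ℂ) (hv : v ∈ M.W) (hEv : S.Estar M.r *ᵥ v = v)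
    (k : ℕ) : S.A *ᵥ vseq S M v k = vseq S M v (k + 1) + aW S M k • vseq S M v k
    + xW S M k • vseq S M v (k - 1) := by
  have h := S.A_tri (M.r + k) _ (vseq_E S M v hEv k)
  have ha : S.Estar (M.r + k) *ᵥ (S.A *ᵥ vseq S M v k) = aW S M k • vseq S M v k :=
    trace_line S M _ _ S.A_mem_T _ (vseq_mem S M v hv k) (vseq_E S M v hEv k)
  have hx : (if M.r + k = 0 then 0 else S.Estar (M.r + k - 1) *ᵥ (S.A *ᵥ vseq S M v k))
      = xW S M k • vseq S M v (k - 1) := by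
    cases k with
    | zero =>
      simp only [xW, if_true, zero_smul]
      split_ifs with h0
      · rfl
      · by_contra hne
        have : M.W.map (S.Estar (M.r + 0 - 1)).mulVecLin ≠ ⊥ := by
          intro hb
          apply hne
          have : S.Estar (M.r + 0 - 1) *ᵥ (S.A *ᵥ vseq S M v 0) ∈
              M.W.map (S.Estar (M.r + 0 - 1)).mulVecLin :=
            ⟨_, M.hWinv _ S.A_mem_T _ (vseq_mem S M v hv 0), rfl⟩
          rw [hb] at this
          simpa using this
        have := (M.hr _).mp this
        omega
    | succ k =>
      rw [if_neg (by omega)]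
      have e1 : M.r + (k + 1) - 1 = M.r + k := by omega
      have e2 : xW S M (k + 1) =
          trW S M (S.Estar (M.r + k) * (S.A * (S.Estar (M.r + (k + 1)) * S.A))) := by
        unfold xW
        rw [if_neg (by omega), e1]
        rw [mul_assoc (S.Estar (M.r + (k+1)) * S.A), trW_comm S M
          (S.Estar (M.r + (k+1)) * S.A) (S.Estar (M.r + k) * S.A)
          (mul_mem (S.Estar_mem_T _) S.A_mem_T) (mul_mem (S.Estar_mem_T _) S.A_mem_T)]
        simp only [mul_assoc]
      rw [e1, e2, Nat.add_sub_cancel]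
      rw [← trace_line S M (M.r + k) (S.A * (S.Estar (M.r + (k + 1)) * S.A))
        (mul_mem S.A_mem_T (mul_mem (S.Estar_mem_T _) S.A_mem_T)) _
        (vseq_mem S M v hv k) (vseq_E S M v hEv k)]
      simp only [← mulVec_mulVec]
      rfl
  rw [ha, hx] at h
  exact h

lemma vseq_herm (S : TSetup X) (M : TMod S) (v : X → ℂ) (hv : v ∈ M.W) (hEv : S.Estar M.r *ᵥ v = v)
    (z : X → ℂ) (θ : ℝ) (hz : S.A *ᵥ z = (θ : ℂ) • z) (k : ℕ) :
    herm (vseq S M v k) z = (pW S M k).eval (θ : ℂ) * herm v z := by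
  have hrec : ∀ k, (θ : ℂ) * herm (vseq S M v k) z = herm (vseq S M v (k + 1)) z
      + aW S M k * herm (vseq S M v k) z + xW S M k * herm (vseq S M v (k - 1)) z := by
    intro k
    have := herm_mulVec S.A_herm (vseq S M v k) z
    rw [hz, herm_smul_right, Complex.conj_ofReal, vseq_A S M v hv hEv k] at this
    rw [← this]
    simp only [herm_add_left, herm_smul_left]
  induction k using Nat.strong_induction_on with
  | _ k ih =>
    match k with
    | 0 => simp [pW, vseq]
    | 1 =>
      have h := hrec 0
      have h0 : herm (vseq S M v 0) z = herm v z := rfl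
      simp only [xW, if_true, h0] at h
      simp only [pW, Polynomial.eval_sub, Polynomial.eval_X, Polynomial.eval_C]
      linear_combination -h
    | (n + 2) =>
      have h := hrec (n + 1)
      rw [ih (n + 1) (by omega), Nat.add_sub_cancel, ih n (by omega)] at h
      simp only [pW, Polynomial.eval_sub, Polynomial.eval_X, Polynomial.eval_C,
        Polynomial.eval_mul]
      linear_combination -h

lemma vseq_ne_zero (S : TSetup X) (M : TMod S) (v : X → ℂ) (hv : v ∈ M.W) (hEv : S.Estar M.r *ᵥ v = v)
    (hv0 : v ≠ 0) (i : ℕ) (hi : i ≤ M.d) : vseq S M v i ≠ 0 := by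
  intro h0
  let U : Submodule ℂ (X → ℂ) := Submodule.span ℂ (Set.range (vseq S M v))
  have hUW : U ≤ M.W := by
    rw [Submodule.span_le]
    rintro _ ⟨k, rfl⟩
    exact vseq_mem S M v hv k
  have hmem : ∀ k, vseq S M v k ∈ U := fun k => Submodule.subset_span ⟨k, rfl⟩
  have hstar : ∀ m k, S.Estar m *ᵥ vseq S M v k
      = if m = M.r + k then vseq S M v k else 0 := by
    intro m k
    rw [← vseq_E S M v hEv k, TSetup.Estar_Estar]
  have hgen : ∀ B : Matrix X X ℂ, (∀ k, B *ᵥ vseq S M v k ∈ U) → ∀ w ∈ U, B *ᵥ w ∈ U := by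
    intro B hB w hw
    have : U ≤ U.comap B.mulVecLin := by
      refine Submodule.span_le.mpr ?_
      rintro _ ⟨k, rfl⟩
      exact hB k
    exact this hw
  have hA : ∀ w ∈ U, S.A *ᵥ w ∈ U := hgen _ fun k => by
    rw [vseq_A S M v hv hEv k]
    exact add_mem (add_mem (hmem _) (U.smul_mem _ (hmem _))) (U.smul_mem _ (hmem _))
  have hAs : ∀ w ∈ U, S.Astar *ᵥ w ∈ U := hgen _ fun k => by
    rw [S.hAstarspec, Matrix.sum_mulVec]
    refine Submodule.sum_mem _ fun m _ => ?_
    rw [Matrix.smul_mulVec, hstar]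
    refine U.smul_mem _ ?_
    split_ifs
    · exact hmem k
    · exact zero_mem _
  have hT : ∀ B ∈ S.T, ∀ w ∈ U, B *ᵥ w ∈ U := by
    intro B hB
    induction hB using Algebra.adjoin_induction with
    | mem B hB =>
      rcases hB with rfl | rfl
      · exact hA
      · exact hAs
    | algebraMap c =>
      intro w hw
      rw [Algebra.algebraMap_eq_smul_one, Matrix.smul_mulVec, one_mulVec]
      exact U.smul_mem _ hw
    | add B C _ _ hB hC =>
      intro w hw
      rw [add_mulVec]; exact add_mem (hB w hw) (hC w hw)
    | mul B C _ _ hB hC =>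
      intro w hw
      rw [← mulVec_mulVec]; exact hB _ (hC w hw)
  rcases M.hWirr U hUW hT with h | h
  · have := hmem 0
    rw [h] at this
    exact hv0 ((Submodule.mem_bot ℂ).mp this)
  · have hne := (M.hr (M.r + i)).mpr ⟨by omega, by omega⟩
    apply hne
    rw [← h, Submodule.map_span, Submodule.span_eq_bot]
    rintro _ ⟨_, ⟨k, rfl⟩, rfl⟩
    rw [mulVecLin_apply, hstar]
    split_ifs with hk
    · have : k = i := by omega
      rw [this, h0]
    · rfl

/-- For nonzero `u ∈ E_t W`, nonzero `v ∈ E*_r W` and `0 ≤ i, j ≤ d`: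
`⟨E*_{r+i} u, E_{t+j} v⟩ = u_i(θ_{t+j}) k_i(W) k*_j(W) ⟨u,v⟩ / ν(W)`,
where `u_i = p_i / p_i(θ_t)`. -/
theorem stmt15 (S : TSetup X) (M : TMod S) (hd : 0 < M.d) :
    ∀ u ∈ M.W.map (S.E M.t).mulVecLin, u ≠ 0 →
    ∀ v ∈ M.W.map (S.Estar M.r).mulVecLin, v ≠ 0 →
    ∀ i ≤ M.d, ∀ j ≤ M.d,
      herm (S.Estar (M.r + i) *ᵥ u) (S.E (M.t + j) *ᵥ v) =
        ((pW S M i).eval ((S.θ (M.t + j) : ℂ)) / (pW S M i).eval ((S.θ M.t : ℂ)))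
          * kW S M i * kstarW S M j * herm u v / nuW S M := by
  intro u hu _hu0 v hv hv0 i hi j hj
  obtain ⟨u0, hu0, rfl⟩ := hu
  have huW : S.E M.t *ᵥ u0 ∈ M.W := M.hWinv _ (S.E_mem_T _) _ hu0
  have hEu : S.E M.t *ᵥ (S.E M.t *ᵥ u0) = S.E M.t *ᵥ u0 := by
    rw [mulVec_mulVec, S.E_idem]
  rw [mulVecLin_apply]
  generalize S.E M.t *ᵥ u0 = u at huW hEu
  obtain ⟨v0, hv0W, rfl⟩ := hv
  rw [mulVecLin_apply] at hv0
  have hvW : S.Estar M.r *ᵥ v0 ∈ M.W := M.hWinv _ (S.Estar_mem_T _) _ hv0W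
  have hEv : S.Estar M.r *ᵥ (S.Estar M.r *ᵥ v0) = S.Estar M.r *ᵥ v0 := by
    simp [S.Estar_Estar]
  rw [mulVecLin_apply]
  generalize S.Estar M.r *ᵥ v0 = v at hv0 hvW hEv
  clear hd
  have hvi0 := vseq_ne_zero S M v hvW hEv hv0 i hi
  have hviW := vseq_mem S M v hvW i
  have hviE := vseq_E S M v hEv i
  have hH := vseq_herm S M v hvW hEv
  have hAE : ∀ m w, S.A *ᵥ (S.E m *ᵥ w) = (S.θ m : ℂ) • (S.E m *ᵥ w) := by
    intro m w
    rw [mulVec_mulVec, S.A_E, Matrix.smul_mulVec]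
  have hAu : S.A *ᵥ u = (S.θ M.t : ℂ) • u := by
    have := hAE M.t u
    rwa [hEu] at this
  have hN0 : herm v v ≠ 0 := fun h => hv0 (herm_self_eq_zero h)
  -- traces
  have hm : ∀ j, trW S M (S.E (M.t + j) * S.Estar M.r) * herm v v
      = herm v (S.E (M.t + j) *ᵥ v) := by
    intro j
    rw [trW_comm S M _ _ (S.E_mem_T _) (S.Estar_mem_T _), ← herm_smul_left,
      ← trace_line S M M.r _ (S.E_mem_T _) v hvW hEv, herm_mulVec (S.Estar_herm _), hEv,
      herm_mulVec (S.E_herm _)]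
  have hm0 := hm 0
  rw [add_zero] at hm0
  have hH1 := hH u (S.θ M.t) hAu i
  have hH2 := hH _ (S.θ (M.t + j)) (hAE (M.t + j) v) i
  have hH3 := hH _ (S.θ M.t) (hAE M.t (vseq S M v i)) i
  have hH4 := hH _ (S.θ M.t) (hAE M.t v) i
  have hms : trW S M (S.Estar (M.r + i) * S.E M.t) * herm (vseq S M v i) (vseq S M v i)
      = herm (vseq S M v i) (S.E M.t *ᵥ vseq S M v i) := by
    rw [← herm_smul_left, ← trace_line S M (M.r + i) _ (S.E_mem_T _) _ hviW hviE,
      herm_mulVec (S.Estar_herm _), hviE, herm_mulVec (S.E_herm _)]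
  obtain ⟨c, hc⟩ := thin_line S M (M.r + i) _ hviW hviE hvi0 u huW
  have hNi : herm (vseq S M v i) (vseq S M v i) ≠ 0 := fun h => hvi0 (herm_self_eq_zero h)
  have hcN : c * herm (vseq S M v i) (vseq S M v i) = herm u (vseq S M v i) := by
    rw [← herm_smul_left, ← hc, herm_mulVec (S.Estar_herm _), hviE]
  generalize vseq S M v i = w at *
  rw [hc, herm_smul_left, hH2]
  have hH1' : herm u w = (starRingEnd ℂ) ((pW S M i).eval (S.θ M.t : ℂ)) * herm u v := by
    rw [← herm_conj w u, hH1, map_mul, herm_conj]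
  have hreal : (starRingEnd ℂ) (herm v (S.E M.t *ᵥ v)) = herm v (S.E M.t *ᵥ v) := by
    rw [herm_conj, herm_mulVec (S.E_herm _)]
  have h5 : herm v (S.E M.t *ᵥ w)
      = (starRingEnd ℂ) ((pW S M i).eval (S.θ M.t : ℂ)) * herm v (S.E M.t *ᵥ v) := by
    rw [← herm_mulVec (S.E_herm _), ← herm_conj, hH4, map_mul, hreal]
  by_cases huv : herm u v = 0
  · have : c = 0 := by
      rw [hH1', huv, mul_zero] at hcN
      exact (mul_eq_zero.mp hcN).resolve_right hNi
    rw [huv, this]; simp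
  have hm0ne : trW S M (S.E M.t * S.Estar M.r) ≠ 0 := by
    intro h
    rw [h, zero_mul] at hm0
    have h6 : herm (S.E M.t *ᵥ v) (S.E M.t *ᵥ v) = 0 := by
      rw [herm_mulVec (S.E_herm _), mulVec_mulVec, S.E_idem, ← hm0]
    apply huv
    rw [← hEu, herm_mulVec (S.E_herm _), herm_self_eq_zero h6, herm_zero_right]
  rw [← hm j]
  rw [hH3, h5, ← hm0] at hms
  rw [hH1'] at hcN
  unfold kW kstarW nuW
  generalize trW S M (S.E M.t * S.Estar M.r) = m0 at *
  generalize trW S M (S.E (M.t + j) * S.Estar M.r) = mj at *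
  generalize trW S M (S.Estar (M.r + i) * S.E M.t) = ms at *
  generalize Polynomial.eval (S.θ M.t : ℂ) (pW S M i) = P at *
  generalize Polynomial.eval (S.θ (M.t + j) : ℂ) (pW S M i) = Q at *
  have hms' : ms = P * ((starRingEnd ℂ) P * (m0 * herm v v)) / herm w w := by
    rw [eq_div_iff hNi, hms]
  have hc' : c = (starRingEnd ℂ) P * herm u v / herm w w := by
    rw [eq_div_iff hNi, hcN]
  rw [hms', hc']
  by_cases hP : P = 0
  · simp [hP]
  · field_simp
end
end
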